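/- For each time t = 0,…,T−1 there exists a function f̃_t^1, independent of the strategy pair (g, ψ^2), such that along every realization of positive probability, Π_{t+1}^1 = f̃_t^1(Π_t^1, U_t^1, U_t^2, Z_{t+1}^1). Consequently, for any set P¹ of distributions in Δ(𝒳_{t+1}), P(Π_{t+1}^1 ∈ P¹ | M_t^1, U_t^2) = P(Π_{t+1}^1 ∈ P¹ | Π_t^1, U_t^1, U_t^2). -/

import Mathlib

/-!
Common framework: a two-agent sequential dynamic team with nested information
structure (Dave & Malikopoulos, "Structural results for decentralized
stochastic control with a nested information structure").

* `X t` : state space at time `t`; `U1 t`, `U2 t` : action spaces of agents 1 and 2;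
* `W t` : disturbance; `V1 t`, `V2 t` : measurement noises; `Y1 t`, `Y2 t` : observations.
* Dynamics `X_{t+1} = f t X_t U¹_t U²_t W_t`, observations `Y^k_t = h^k t X_t V^k_t`.
* Memories `M²_t = (Y²_{0:t}, U²_{0:t-1})`, `L_t^{[1,2]} = (Y¹_{0:t}, U¹_{0:t-1})`,
  `M¹_t = (L_t^{[1,2]}, M²_t)` (nested information).
* The primitive random variables are independent with given PMFs; the sample
  space for horizon `T` is `ΩT`, with the product mass function `mass`.
-/

open scoped Classical
open Finset

namespace NestedTeam

noncomputable section

/-- Memory of agent 2 at time `t`: observations `Y²₀,…,Y²ₜ` and actions `U²₀,…,U²ₜ₋₁`. -/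
abbrev M2 (Y2 U2 : ℕ → Type) (t : ℕ) : Type :=
  ((s : Fin (t + 1)) → Y2 s) × ((s : Fin t) → U2 s)

/-- The private information `L_t^{[1,2]} = M¹_t \ M²_t` of agent 1. -/
abbrev Lp (Y1 U1 : ℕ → Type) (t : ℕ) : Type :=
  ((s : Fin (t + 1)) → Y1 s) × ((s : Fin t) → U1 s)

/-- Memory of agent 1 at time `t` (nested information: it contains `M²_t`). -/
abbrev M1 (Y1 Y2 U1 U2 : ℕ → Type) (t : ℕ) : Type :=
  Lp Y1 U1 t × M2 Y2 U2 t

/-- The system: dynamics, observation maps and per-stage cost. -/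
structure Sys (X U1 U2 W V1 V2 Y1 Y2 : ℕ → Type) where
  f : ∀ t, X t → U1 t → U2 t → W t → X (t + 1)
  h1 : ∀ t, X t → V1 t → Y1 t
  h2 : ∀ t, X t → V2 t → Y2 t
  c : ∀ t, X t → U1 t → U2 t → ℝ

/-- A control strategy profile: `U¹_t = g1 t M¹_t`, `U²_t = g2 t M²_t`. -/
structure Strat (U1 U2 Y1 Y2 : ℕ → Type) where
  g1 : ∀ t, M1 Y1 Y2 U1 U2 t → U1 t
  g2 : ∀ t, M2 Y2 U2 t → U2 t

/-- A realization of the primitive random variables. -/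
structure Prim (X W V1 V2 : ℕ → Type) where
  x0 : X 0
  w : ∀ t, W t
  v1 : ∀ t, V1 t
  v2 : ∀ t, V2 t

variable {X U1 U2 W V1 V2 Y1 Y2 : ℕ → Type}

/-- The closed-loop trajectory: states `X_{0:t}` and actions `U^{1:2}_{0:t-1}`. -/
def hist (S : Sys X U1 U2 W V1 V2 Y1 Y2) (g : Strat U1 U2 Y1 Y2) (ρ : Prim X W V1 V2) :
    (t : ℕ) → ((s : Fin (t + 1)) → X s) × ((s : Fin t) → U1 s × U2 s)
  | 0 => (Fin.cons (α := fun s : Fin 1 => X s) ρ.x0 (fun i => i.elim0), fun i => i.elim0)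
  | t + 1 =>
    let p := hist S g ρ t
    let y1 : (s : Fin (t + 1)) → Y1 s := fun s => S.h1 s (p.1 s) (ρ.v1 s)
    let y2 : (s : Fin (t + 1)) → Y2 s := fun s => S.h2 s (p.1 s) (ρ.v2 s)
    let m1 : M1 Y1 Y2 U1 U2 t := ((y1, fun s => (p.2 s).1), (y2, fun s => (p.2 s).2))
    let a1 := g.g1 t m1
    let a2 := g.g2 t m1.2
    (Fin.snoc (α := fun s : Fin (t + 2) => X s) p.1 (S.f t (p.1 (Fin.last t)) a1 a2 (ρ.w t)),
     Fin.snoc (α := fun s : Fin (t + 1) => U1 s × U2 s) p.2 (a1, a2))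

/-- State `X_t` along the closed loop. -/
def xTraj (S : Sys X U1 U2 W V1 V2 Y1 Y2) (g : Strat U1 U2 Y1 Y2) (ρ : Prim X W V1 V2)
    (t : ℕ) : X t := (hist S g ρ t).1 (Fin.last t)

/-- `L_t^{[1,2]} = (Y¹_{0:t}, U¹_{0:t-1})` along the closed loop. -/
def lpTraj (S : Sys X U1 U2 W V1 V2 Y1 Y2) (g : Strat U1 U2 Y1 Y2) (ρ : Prim X W V1 V2)
    (t : ℕ) : Lp Y1 U1 t :=
  (fun s => S.h1 s ((hist S g ρ t).1 s) (ρ.v1 s), fun s => ((hist S g ρ t).2 s).1)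

/-- `M²_t = (Y²_{0:t}, U²_{0:t-1})` along the closed loop. -/
def m2Traj (S : Sys X U1 U2 W V1 V2 Y1 Y2) (g : Strat U1 U2 Y1 Y2) (ρ : Prim X W V1 V2)
    (t : ℕ) : M2 Y2 U2 t :=
  (fun s => S.h2 s ((hist S g ρ t).1 s) (ρ.v2 s), fun s => ((hist S g ρ t).2 s).2)

/-- `M¹_t` along the closed loop. -/
def m1Traj (S : Sys X U1 U2 W V1 V2 Y1 Y2) (g : Strat U1 U2 Y1 Y2) (ρ : Prim X W V1 V2)
    (t : ℕ) : M1 Y1 Y2 U1 U2 t := (lpTraj S g ρ t, m2Traj S g ρ t)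

/-- Action `U¹_t` along the closed loop. -/
def u1Traj (S : Sys X U1 U2 W V1 V2 Y1 Y2) (g : Strat U1 U2 Y1 Y2) (ρ : Prim X W V1 V2)
    (t : ℕ) : U1 t := g.g1 t (m1Traj S g ρ t)

/-- Action `U²_t` along the closed loop. -/
def u2Traj (S : Sys X U1 U2 W V1 V2 Y1 Y2) (g : Strat U1 U2 Y1 Y2) (ρ : Prim X W V1 V2)
    (t : ℕ) : U2 t := g.g2 t (m2Traj S g ρ t)

/-- Observation `Y¹_t` along the closed loop. -/
def y1Traj (S : Sys X U1 U2 W V1 V2 Y1 Y2) (g : Strat U1 U2 Y1 Y2) (ρ : Prim X W V1 V2)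
    (t : ℕ) : Y1 t := S.h1 t (xTraj S g ρ t) (ρ.v1 t)

/-- Observation `Y²_t` along the closed loop. -/
def y2Traj (S : Sys X U1 U2 W V1 V2 Y1 Y2) (g : Strat U1 U2 Y1 Y2) (ρ : Prim X W V1 V2)
    (t : ℕ) : Y2 t := S.h2 t (xTraj S g ρ t) (ρ.v2 t)

/-- New information `Z¹_{t+1} = (Y¹_{t+1}, U¹_t, Y²_{t+1}, U²_t)` of agent 1. -/
def z1Traj (S : Sys X U1 U2 W V1 V2 Y1 Y2) (g : Strat U1 U2 Y1 Y2) (ρ : Prim X W V1 V2)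
    (t : ℕ) : Y1 (t + 1) × U1 t × Y2 (t + 1) × U2 t :=
  (y1Traj S g ρ (t + 1), u1Traj S g ρ t, y2Traj S g ρ (t + 1), u2Traj S g ρ t)

/-- New information `Z²_{t+1} = (Y²_{t+1}, U²_t)` of agent 2. -/
def z2Traj (S : Sys X U1 U2 W V1 V2 Y1 Y2) (g : Strat U1 U2 Y1 Y2) (ρ : Prim X W V1 V2)
    (t : ℕ) : Y2 (t + 1) × U2 t := (y2Traj S g ρ (t + 1), u2Traj S g ρ t)

/-- Sample space of primitive random variables for horizon `T`. -/
abbrev ΩT (X W V1 V2 : ℕ → Type) (T : ℕ) : Type :=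
  X 0 × ((t : Fin (T + 1)) → W t) × ((t : Fin (T + 1)) → V1 t) × ((t : Fin (T + 1)) → V2 t)

/-- Extend a finite-horizon family to all times (by junk beyond the horizon). -/
def ext {α : ℕ → Type} [∀ t, Inhabited (α t)] (T : ℕ) (a : (t : Fin (T + 1)) → α t)
    (t : ℕ) : α t := if h : t < T + 1 then a ⟨t, h⟩ else default

/-- The primitive realization corresponding to a sample point. -/
def toPrim [∀ t, Inhabited (W t)] [∀ t, Inhabited (V1 t)] [∀ t, Inhabited (V2 t)]
    (T : ℕ) (ω : ΩT X W V1 V2 T) : Prim X W V1 V2 :=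
  ⟨ω.1, ext T ω.2.1, ext T ω.2.2.1, ext T ω.2.2.2⟩

/-- The (known) probability mass functions of the mutually independent primitive
random variables. -/
structure PrimPMF (X W V1 V2 : ℕ → Type) [Fintype (X 0)] [∀ t, Fintype (W t)]
    [∀ t, Fintype (V1 t)] [∀ t, Fintype (V2 t)] where
  pX0 : X 0 → ℝ
  pW : ∀ t, W t → ℝ
  pV1 : ∀ t, V1 t → ℝ
  pV2 : ∀ t, V2 t → ℝ
  pX0_nonneg : ∀ x, 0 ≤ pX0 x
  pX0_sum : ∑ x, pX0 x = 1
  pW_nonneg : ∀ t w, 0 ≤ pW t w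
  pW_sum : ∀ t, ∑ w, pW t w = 1
  pV1_nonneg : ∀ t v, 0 ≤ pV1 t v
  pV1_sum : ∀ t, ∑ v, pV1 t v = 1
  pV2_nonneg : ∀ t v, 0 ≤ pV2 t v
  pV2_sum : ∀ t, ∑ v, pV2 t v = 1

variable [Fintype (X 0)] [∀ t, Fintype (W t)] [∀ t, Fintype (V1 t)] [∀ t, Fintype (V2 t)]
variable [∀ t, Inhabited (W t)] [∀ t, Inhabited (V1 t)] [∀ t, Inhabited (V2 t)]

/-- Product mass of a sample point (independent primitives). -/
def mass (P : PrimPMF X W V1 V2) (T : ℕ) (ω : ΩT X W V1 V2 T) : ℝ :=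
  P.pX0 ω.1 * (∏ t : Fin (T + 1), P.pW t (ω.2.1 t)) *
    (∏ t : Fin (T + 1), P.pV1 t (ω.2.2.1 t)) * (∏ t : Fin (T + 1), P.pV2 t (ω.2.2.2 t))

/-- Elementary conditional probability `P(A | B)` on a finite sample space. -/
def condProb {Ω : Type*} [Fintype Ω] (P : Ω → ℝ) (A B : Ω → Prop) : ℝ :=
  (∑ ω, if A ω ∧ B ω then P ω else 0) / (∑ ω, if B ω then P ω else 0)

/-- Elementary conditional expectation `E[F | B]` on a finite sample space. -/
def condExp {Ω : Type*} [Fintype Ω] (P : Ω → ℝ) (F : Ω → ℝ) (B : Ω → Prop) : ℝ :=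
  (∑ ω, if B ω then P ω * F ω else 0) / (∑ ω, if B ω then P ω else 0)

/-- Agent 1's information state `Π¹_t = P(X_t = · | M¹_t)` at the realization `ω`. -/
def infoState1 (S : Sys X U1 U2 W V1 V2 Y1 Y2) (g : Strat U1 U2 Y1 Y2)
    (P : PrimPMF X W V1 V2) (T : ℕ) (ω : ΩT X W V1 V2 T) (t : ℕ) : X t → ℝ :=
  fun x => condProb (mass P T)
    (fun ω' => xTraj S g (toPrim T ω') t = x)
    (fun ω' => m1Traj S g (toPrim T ω') t = m1Traj S g (toPrim T ω) t)

/-- Agent 2's information state `Π²_t = P((X_t, L_t^{[1,2]}) = · | M²_t)` at `ω`. -/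
def infoState2 (S : Sys X U1 U2 W V1 V2 Y1 Y2) (g : Strat U1 U2 Y1 Y2)
    (P : PrimPMF X W V1 V2) (T : ℕ) (ω : ΩT X W V1 V2 T) (t : ℕ) :
    X t × Lp Y1 U1 t → ℝ :=
  fun sl => condProb (mass P T)
    (fun ω' => (xTraj S g (toPrim T ω') t, lpTraj S g (toPrim T ω') t) = sl)
    (fun ω' => m2Traj S g (toPrim T ω') t = m2Traj S g (toPrim T ω) t)

/-- Per-stage cost along the closed loop. -/
def stageCost (S : Sys X U1 U2 W V1 V2 Y1 Y2) (g : Strat U1 U2 Y1 Y2) (ρ : Prim X W V1 V2)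
    (t : ℕ) : ℝ := S.c t (xTraj S g ρ t) (u1Traj S g ρ t) (u2Traj S g ρ t)

/-- Expected cost-to-go `𝒥_{t₀}(g) = E[Σ_{t=t₀}^T c_t(X_t,U¹_t,U²_t)]`. -/
def costToGo (S : Sys X U1 U2 W V1 V2 Y1 Y2) (g : Strat U1 U2 Y1 Y2)
    (P : PrimPMF X W V1 V2) (T t0 : ℕ) : ℝ :=
  ∑ ω : ΩT X W V1 V2 T, mass P T ω * ∑ t ∈ Finset.Icc t0 T, stageCost S g (toPrim T ω) t

/-- Expected total cost `𝒥(g) = E[Σ_{t=0}^T c_t(X_t,U¹_t,U²_t)]`. -/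
def totalCost (S : Sys X U1 U2 W V1 V2 Y1 Y2) (g : Strat U1 U2 Y1 Y2)
    (P : PrimPMF X W V1 V2) (T : ℕ) : ℝ := costToGo S g P T 0

/-- `(g, ψ²)` is a compatible control/prescription pair: agent 1's action is
generated by the prescription `Γ_t^{[2,1]} = ψ_t(M²_t)` applied to `Π¹_t`. -/
def Compat (S : Sys X U1 U2 W V1 V2 Y1 Y2) (g : Strat U1 U2 Y1 Y2)
    (ψ : ∀ t, M2 Y2 U2 t → (X t → ℝ) → U1 t) (P : PrimPMF X W V1 V2) (T : ℕ) : Prop :=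
  ∀ t, t ≤ T → ∀ ω : ΩT X W V1 V2 T, 0 < mass P T ω →
    u1Traj S g (toPrim T ω) t =
      ψ t (m2Traj S g (toPrim T ω) t) (infoState1 S g P T ω t)

/-- The map `e_t` of Lemma 4: conditioning a joint distribution on
`𝒳_t × 𝓛_t^{[1,2]}` on its second component. -/
def eMap [∀ t, Fintype (X t)] (t : ℕ) (π2 : X t × Lp Y1 U1 t → ℝ) (l : Lp Y1 U1 t) :
    X t → ℝ := fun x => π2 (x, l) / ∑ x', π2 (x', l)

set_option linter.unusedSectionVars false

theorem hlp_resample_pi {n : ℕ} {α : Fin (n+1) → Type} [∀ i, Fintype (α i)] (p : ∀ i, α i → ℝ)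
    (hp : ∀ i, ∑ b, p i b = 1) (i : Fin (n+1)) (F : (∀ j, α j) → α i → ℝ)
    (hF : ∀ a a' : (∀ j, α j), (∀ j, j ≠ i → a j = a' j) → F a = F a') :
    ∑ a : (∀ j, α j), (∏ j, p j (a j)) * F a (a i) =
      ∑ a : (∀ j, α j), (∏ j, p j (a j)) * ∑ b, p i b * F a b := by
  rw [← (Fin.insertNthEquiv α i).sum_comp, ← (Fin.insertNthEquiv α i).sum_comp]
  rw [Fintype.sum_prod_type_right, Fintype.sum_prod_type_right]
  refine Finset.sum_congr rfl fun r _ => ?_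
  simp only [Fin.insertNthEquiv_apply, Fin.prod_univ_succAbove _ i, Fin.insertNth_apply_same,
    Fin.insertNth_apply_succAbove]
  have key : ∀ c c' : α i, F (Fin.insertNth i c r) = F (Fin.insertNth i c' r) := by
    intro c c'
    apply hF
    intro j hj
    obtain ⟨k, rfl⟩ := Fin.exists_succAbove_eq hj
    simp
  by_cases hne : Nonempty (α i)
  · obtain ⟨c0⟩ := hne
    have l : ∀ c, F (Fin.insertNth i c r) c = F (Fin.insertNth i c0 r) c :=
      fun c => congrFun (key c c0) c
    have l' : ∀ c, (∑ b, p i b * F (Fin.insertNth i c r) b) =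
        ∑ b, p i b * F (Fin.insertNth i c0 r) b := fun c => by rw [key c c0]
    trans ∑ c, p i c * (∏ j, p (i.succAbove j) (r j)) * F (Fin.insertNth i c0 r) c
    · exact Finset.sum_congr rfl fun c _ => congrArg _ (l c)
    trans ∑ c, p i c * (∏ j, p (i.succAbove j) (r j)) *
      ∑ b, p i b * F (Fin.insertNth i c0 r) b
    swap
    · exact Finset.sum_congr rfl fun c _ => congrArg _ (l' c).symm
    rw [← Finset.sum_mul, ← Finset.sum_mul, hp, one_mul, Finset.mul_sum]
    refine Finset.sum_congr rfl fun c _ => ?_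
    ring
  · rw [not_nonempty_iff] at hne
    simp

theorem hlp_resample3 (P : PrimPMF X W V1 V2) (T : ℕ) (i j k : Fin (T+1))
    (Φ : ΩT X W V1 V2 T → W i → V1 j → V2 k → ℝ)
    (hΦ : ∀ ω ω' : ΩT X W V1 V2 T, ω.1 = ω'.1 → (∀ s, s ≠ i → ω.2.1 s = ω'.2.1 s) →
      (∀ s, s ≠ j → ω.2.2.1 s = ω'.2.2.1 s) → (∀ s, s ≠ k → ω.2.2.2 s = ω'.2.2.2 s) →
      Φ ω = Φ ω') :
    ∑ ω, mass P T ω * Φ ω (ω.2.1 i) (ω.2.2.1 j) (ω.2.2.2 k) =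
      ∑ ω, mass P T ω * ∑ a, P.pW i a * ∑ b, P.pV1 j b * ∑ c, P.pV2 k c * Φ ω a b c := by
  have e1 : ∑ ω, mass P T ω * Φ ω (ω.2.1 i) (ω.2.2.1 j) (ω.2.2.2 k) =
      ∑ ω, mass P T ω * ∑ c, P.pV2 k c * Φ ω (ω.2.1 i) (ω.2.2.1 j) c := by
    simp only [Fintype.sum_prod_type, mass]
    refine Finset.sum_congr rfl fun x _ => Finset.sum_congr rfl fun w _ =>
      Finset.sum_congr rfl fun v1 _ => ?_
    simp only [mul_assoc, ← Finset.mul_sum]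
    congr 3
    exact hlp_resample_pi (α := fun s : Fin (T+1) => V2 s) (fun s => P.pV2 s)
      (fun s => P.pV2_sum s) k (fun v2 c => Φ (x, w, v1, v2) (w i) (v1 j) c)
      (fun a a' h => by
        funext c
        exact congrFun (congrFun (congrFun (hΦ (x, w, v1, a) (x, w, v1, a') rfl (fun _ _ => rfl)
          (fun _ _ => rfl) h) _) _) _)
  have e2 : ∑ ω, mass P T ω * ∑ c, P.pV2 k c * Φ ω (ω.2.1 i) (ω.2.2.1 j) c =
      ∑ ω, mass P T ω * ∑ b, P.pV1 j b * ∑ c, P.pV2 k c * Φ ω (ω.2.1 i) b c := by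
    simp only [Fintype.sum_prod_type, mass]
    refine Finset.sum_congr rfl fun x _ => Finset.sum_congr rfl fun w _ => ?_
    rw [Finset.sum_comm]
    conv_rhs => rw [Finset.sum_comm]
    refine Finset.sum_congr rfl fun v2 _ => ?_
    have := hlp_resample_pi (α := fun s : Fin (T+1) => V1 s) (fun s => P.pV1 s)
      (fun s => P.pV1_sum s) j (fun v1 b => ∑ c, P.pV2 k c * Φ (x, w, v1, v2) (w i) b c)
      (fun a a' h => by
        funext c
        simp only [hΦ (x, w, a, v2) (x, w, a', v2) rfl (fun _ _ => rfl) h (fun _ _ => rfl)])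
    have h2 := congrArg (fun r => (P.pX0 x * ∏ t : Fin (T + 1), P.pW t (w t)) *
      (∏ t : Fin (T + 1), P.pV2 t (v2 t)) * r) this
    simp only [Finset.mul_sum] at h2 ⊢
    convert h2 using 1
    · exact Finset.sum_congr rfl fun _ _ => Finset.sum_congr rfl fun _ _ => by ring
    · exact Finset.sum_congr rfl fun _ _ => Finset.sum_congr rfl fun _ _ =>
        Finset.sum_congr rfl fun _ _ => by ring
  have e3 : ∑ ω, mass P T ω * ∑ b, P.pV1 j b * ∑ c, P.pV2 k c * Φ ω (ω.2.1 i) b c =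
      ∑ ω, mass P T ω * ∑ a, P.pW i a * ∑ b, P.pV1 j b * ∑ c, P.pV2 k c * Φ ω a b c := by
    simp only [Fintype.sum_prod_type, mass]
    refine Finset.sum_congr rfl fun x _ => ?_
    rw [Finset.sum_comm]
    conv_rhs => rw [Finset.sum_comm]
    refine Finset.sum_congr rfl fun v1 _ => ?_
    rw [Finset.sum_comm]
    conv_rhs => rw [Finset.sum_comm]
    refine Finset.sum_congr rfl fun v2 _ => ?_
    have := hlp_resample_pi (α := fun s : Fin (T+1) => W s) (fun s => P.pW s)
      (fun s => P.pW_sum s) i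
      (fun w a => ∑ b, P.pV1 j b * ∑ c, P.pV2 k c * Φ (x, w, v1, v2) a b c)
      (fun a a' h => by
        funext c
        simp only [hΦ (x, a, v1, v2) (x, a', v1, v2) rfl h (fun _ _ => rfl) (fun _ _ => rfl)])
    have h2 := congrArg (fun r => P.pX0 x * (∏ t : Fin (T + 1), P.pV1 t (v1 t)) *
      (∏ t : Fin (T + 1), P.pV2 t (v2 t)) * r) this
    simp only [Finset.mul_sum] at h2 ⊢
    convert h2 using 1
    · exact Finset.sum_congr rfl fun _ _ => Finset.sum_congr rfl fun _ _ =>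
        Finset.sum_congr rfl fun _ _ => by ring
    · exact Finset.sum_congr rfl fun _ _ => Finset.sum_congr rfl fun _ _ =>
        Finset.sum_congr rfl fun _ _ => Finset.sum_congr rfl fun _ _ => by ring
  rw [e1, e2, e3]


theorem hlp_hist_congr (S : Sys X U1 U2 W V1 V2 Y1 Y2) (g : Strat U1 U2 Y1 Y2)
    (ρ ρ' : Prim X W V1 V2) (t : ℕ) (h0 : ρ.x0 = ρ'.x0) (hw : ∀ s, s < t → ρ.w s = ρ'.w s)
    (h1 : ∀ s, s < t → ρ.v1 s = ρ'.v1 s) (h2 : ∀ s, s < t → ρ.v2 s = ρ'.v2 s) :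
    hist S g ρ t = hist S g ρ' t := by
  induction t with
  | zero => simp [hist, h0]
  | succ t ih =>
    have ih' := ih (fun s hs => hw s (by omega)) (fun s hs => h1 s (by omega))
      (fun s hs => h2 s (by omega))
    have a1 : ∀ s : Fin (t+1), ρ.v1 s = ρ'.v1 s := fun s => h1 s s.2
    have a2 : ∀ s : Fin (t+1), ρ.v2 s = ρ'.v2 s := fun s => h2 s s.2
    simp only [hist, ih', a1, a2, hw t (Nat.lt_succ_self t)]

theorem hlp_m1_congr (S : Sys X U1 U2 W V1 V2 Y1 Y2) (g : Strat U1 U2 Y1 Y2)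
    (ρ ρ' : Prim X W V1 V2) (t : ℕ) (h0 : ρ.x0 = ρ'.x0) (hw : ∀ s, s < t → ρ.w s = ρ'.w s)
    (h1 : ∀ s, s < t + 1 → ρ.v1 s = ρ'.v1 s) (h2 : ∀ s, s < t + 1 → ρ.v2 s = ρ'.v2 s) :
    m1Traj S g ρ t = m1Traj S g ρ' t ∧ xTraj S g ρ t = xTraj S g ρ' t := by
  have hh := hlp_hist_congr S g ρ ρ' t h0 hw (fun s hs => h1 s (by omega))
    (fun s hs => h2 s (by omega))
  have a1 : ∀ s : Fin (t+1), ρ.v1 s = ρ'.v1 s := fun s => h1 s s.2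
  have a2 : ∀ s : Fin (t+1), ρ.v2 s = ρ'.v2 s := fun s => h2 s s.2
  simp only [m1Traj, lpTraj, m2Traj, xTraj, hh, a1, a2, and_self]

theorem hlp_x_succ (S : Sys X U1 U2 W V1 V2 Y1 Y2) (g : Strat U1 U2 Y1 Y2)
    (ρ : Prim X W V1 V2) (t : ℕ) :
    xTraj S g ρ (t+1) = S.f t (xTraj S g ρ t) (u1Traj S g ρ t) (u2Traj S g ρ t) (ρ.w t) := by
  simp only [xTraj, hist]
  exact Fin.snoc_last (α := fun s : Fin (t + 2) => X s) _ _

theorem hlp_hist_x (S : Sys X U1 U2 W V1 V2 Y1 Y2) (g : Strat U1 U2 Y1 Y2)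
    (ρ : Prim X W V1 V2) (t : ℕ) (s : Fin (t+1)) :
    (hist S g ρ (t+1)).1 s.castSucc = (hist S g ρ t).1 s :=
  Fin.snoc_castSucc (α := fun s : Fin (t + 2) => X s) _ _ _

theorem hlp_hist_u (S : Sys X U1 U2 W V1 V2 Y1 Y2) (g : Strat U1 U2 Y1 Y2)
    (ρ : Prim X W V1 V2) (t : ℕ) (s : Fin t) :
    (hist S g ρ (t+1)).2 s.castSucc = (hist S g ρ t).2 s :=
  Fin.snoc_castSucc (α := fun s : Fin (t + 1) => U1 s × U2 s) _ _ _

theorem hlp_hist_u_last (S : Sys X U1 U2 W V1 V2 Y1 Y2) (g : Strat U1 U2 Y1 Y2)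
    (ρ : Prim X W V1 V2) (t : ℕ) :
    (hist S g ρ (t+1)).2 (Fin.last t) = (u1Traj S g ρ t, u2Traj S g ρ t) :=
  Fin.snoc_last (α := fun s : Fin (t + 1) => U1 s × U2 s) _ _

theorem hlp_m1_succ (S : Sys X U1 U2 W V1 V2 Y1 Y2) (g : Strat U1 U2 Y1 Y2)
    (ρ ρ' : Prim X W V1 V2) (t : ℕ) :
    m1Traj S g ρ (t+1) = m1Traj S g ρ' (t+1) ↔
      m1Traj S g ρ t = m1Traj S g ρ' t ∧ y1Traj S g ρ (t+1) = y1Traj S g ρ' (t+1) ∧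
        y2Traj S g ρ (t+1) = y2Traj S g ρ' (t+1) := by
  have e : ∀ r r' : Prim X W V1 V2, ∀ n, m1Traj S g r n = m1Traj S g r' n ↔
      ((∀ s : Fin (n+1), S.h1 s ((hist S g r n).1 s) (r.v1 s) =
        S.h1 s ((hist S g r' n).1 s) (r'.v1 s)) ∧
      (∀ s : Fin n, ((hist S g r n).2 s).1 = ((hist S g r' n).2 s).1)) ∧
      (∀ s : Fin (n+1), S.h2 s ((hist S g r n).1 s) (r.v2 s) =
        S.h2 s ((hist S g r' n).1 s) (r'.v2 s)) ∧
      (∀ s : Fin n, ((hist S g r n).2 s).2 = ((hist S g r' n).2 s).2) := by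
    intro r r' n
    simp only [m1Traj, lpTraj, m2Traj, Prod.mk.injEq, funext_iff]
  constructor
  · intro h
    rw [e] at h
    obtain ⟨⟨ha, hb⟩, hc, hd⟩ := h
    refine ⟨(e _ _ _).2 ⟨⟨fun s => ?_, fun s => ?_⟩, fun s => ?_, fun s => ?_⟩,
      ha (Fin.last _), hc (Fin.last _)⟩
    · have := ha s.castSucc
      rw [hlp_hist_x, hlp_hist_x] at this
      exact this
    · have := hb s.castSucc
      rw [hlp_hist_u, hlp_hist_u] at this
      exact this
    · have := hc s.castSucc
      rw [hlp_hist_x, hlp_hist_x] at this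
      exact this
    · have := hd s.castSucc
      rw [hlp_hist_u, hlp_hist_u] at this
      exact this
  · rintro ⟨hm, h1, h2⟩
    have hu1 : u1Traj S g ρ t = u1Traj S g ρ' t := by simp only [u1Traj, hm]
    have hu2 : u2Traj S g ρ t = u2Traj S g ρ' t :=
      congrArg (fun m : M1 Y1 Y2 U1 U2 t => g.g2 t m.2) hm
    rw [e] at hm
    obtain ⟨⟨ha, hb⟩, hc, hd⟩ := hm
    refine (e _ _ _).2 ⟨⟨fun s => ?_, fun s => ?_⟩, fun s => ?_, fun s => ?_⟩
    · refine Fin.lastCases h1 (fun s => ?_) s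
      rw [hlp_hist_x, hlp_hist_x]
      exact ha s
    · refine Fin.lastCases ?_ (fun s => ?_) s
      · rw [hlp_hist_u_last, hlp_hist_u_last]; exact hu1
      · rw [hlp_hist_u, hlp_hist_u]; exact hb s
    · refine Fin.lastCases h2 (fun s => ?_) s
      rw [hlp_hist_x, hlp_hist_x]
      exact hc s
    · refine Fin.lastCases ?_ (fun s => ?_) s
      · rw [hlp_hist_u_last, hlp_hist_u_last]; exact hu2
      · rw [hlp_hist_u, hlp_hist_u]; exact hd s

/-- One-step kernel applied to a test function. -/
def hlpQ (S : Sys X U1 U2 W V1 V2 Y1 Y2) (P : PrimPMF X W V1 V2) (t : ℕ) (x : X t) (u1 : U1 t)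
    (u2 : U2 t) (F : X (t+1) → Y1 (t+1) → Y2 (t+1) → ℝ) : ℝ :=
  ∑ a, P.pW t a * ∑ b, P.pV1 (t+1) b * ∑ c, P.pV2 (t+1) c *
    F (S.f t x u1 u2 a) (S.h1 (t+1) (S.f t x u1 u2 a) b) (S.h2 (t+1) (S.f t x u1 u2 a) c)

theorem hlp_joint [∀ t, Fintype (X t)] (S : Sys X U1 U2 W V1 V2 Y1 Y2)
    (g : Strat U1 U2 Y1 Y2) (P : PrimPMF X W V1 V2) (T t : ℕ) (ht : t < T)
    (m : M1 Y1 Y2 U1 U2 t) (F : X (t+1) → Y1 (t+1) → Y2 (t+1) → ℝ) :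
    (∑ ω : ΩT X W V1 V2 T, if m1Traj S g (toPrim T ω) t = m then
      mass P T ω * F (xTraj S g (toPrim T ω) (t+1)) (y1Traj S g (toPrim T ω) (t+1))
        (y2Traj S g (toPrim T ω) (t+1)) else 0) =
    ∑ x : X t, (∑ ω : ΩT X W V1 V2 T, if xTraj S g (toPrim T ω) t = x ∧
        m1Traj S g (toPrim T ω) t = m then mass P T ω else 0) *
      hlpQ S P t x (g.g1 t m) (g.g2 t m.2) F := by
  have hi : t < T + 1 := by omega
  have hj : t + 1 < T + 1 := by omega
  have hr := hlp_resample3 P T ⟨t, hi⟩ ⟨t+1, hj⟩ ⟨t+1, hj⟩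
    (fun ω a b c => if m1Traj S g (toPrim T ω) t = m then
      F (S.f t (xTraj S g (toPrim T ω) t) (g.g1 t m) (g.g2 t m.2) a)
        (S.h1 (t+1) (S.f t (xTraj S g (toPrim T ω) t) (g.g1 t m) (g.g2 t m.2) a) b)
        (S.h2 (t+1) (S.f t (xTraj S g (toPrim T ω) t) (g.g1 t m) (g.g2 t m.2) a) c) else 0) (by
    intro ω ω' h0 hw h1 h2
    obtain ⟨hm, hx⟩ := hlp_m1_congr S g (toPrim T ω) (toPrim T ω') t h0
      (fun s hs => by
        have hs' : s < T + 1 := by omega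
        simp only [toPrim, ext, hs', dif_pos]
        exact hw _ (by simp only [ne_eq, Fin.mk.injEq]; omega))
      (fun s hs => by
        have hs' : s < T + 1 := by omega
        simp only [toPrim, ext, hs', dif_pos]
        exact h1 _ (by simp only [ne_eq, Fin.mk.injEq]; omega))
      (fun s hs => by
        have hs' : s < T + 1 := by omega
        simp only [toPrim, ext, hs', dif_pos]
        exact h2 _ (by simp only [ne_eq, Fin.mk.injEq]; omega))
    simp only [hm, hx])
  trans
  · trans
    swap
    · exact hr
    refine Finset.sum_congr rfl fun ω _ => ?_
    have hw : (toPrim T ω).w t = ω.2.1 ⟨t, hi⟩ := by simp [toPrim, ext, hi]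
    have h1 : (toPrim T ω).v1 (t+1) = ω.2.2.1 ⟨t+1, hj⟩ := by
      simp only [toPrim, ext, hj, dif_pos]
    have h2 : (toPrim T ω).v2 (t+1) = ω.2.2.2 ⟨t+1, hj⟩ := by
      simp only [toPrim, ext, hj, dif_pos]
    by_cases hm : m1Traj S g (toPrim T ω) t = m
    · have hu1 : u1Traj S g (toPrim T ω) t = g.g1 t m := by simp only [u1Traj, hm]
      have hu2 : u2Traj S g (toPrim T ω) t = g.g2 t m.2 := by rw [← hm]; rfl
      simp only [hm, if_true, y1Traj, y2Traj, hlp_x_succ, hu1, hu2, hw, h1, h2]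
    · simp only [hm, if_false, mul_zero]
  · simp only [Finset.sum_mul]
    rw [Finset.sum_comm]
    refine Finset.sum_congr rfl fun ω _ => ?_
    by_cases hm : m1Traj S g (toPrim T ω) t = m
    · simp only [hm, and_true, if_true, ite_mul, zero_mul, Finset.sum_ite_eq, Finset.mem_univ,
        hlpQ]
    · simp only [hm, and_false, if_false, mul_zero, zero_mul, Finset.sum_const_zero]

theorem hlp_mass_nonneg (P : PrimPMF X W V1 V2) (T : ℕ) (ω : ΩT X W V1 V2 T) :
    0 ≤ mass P T ω := by
  unfold mass
  refine mul_nonneg (mul_nonneg (mul_nonneg (P.pX0_nonneg _) ?_) ?_) ?_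
  · exact Finset.prod_nonneg fun _ _ => P.pW_nonneg _ _
  · exact Finset.prod_nonneg fun _ _ => P.pV1_nonneg _ _
  · exact Finset.prod_nonneg fun _ _ => P.pV2_nonneg _ _

/-- Probability of the event that agent 1's memory equals `m`. -/
def hlpD (S : Sys X U1 U2 W V1 V2 Y1 Y2) (g : Strat U1 U2 Y1 Y2)
    (P : PrimPMF X W V1 V2) (T t : ℕ) (m : M1 Y1 Y2 U1 U2 t) : ℝ :=
  ∑ ω : ΩT X W V1 V2 T, if m1Traj S g (toPrim T ω) t = m then mass P T ω else 0

theorem hlp_D_pos (S : Sys X U1 U2 W V1 V2 Y1 Y2) (g : Strat U1 U2 Y1 Y2)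
    (P : PrimPMF X W V1 V2) (T t : ℕ) (ω : ΩT X W V1 V2 T) (hω : 0 < mass P T ω) :
    0 < hlpD S g P T t (m1Traj S g (toPrim T ω) t) := by
  unfold hlpD
  refine Finset.sum_pos' (fun ω' _ => ?_) ⟨ω, Finset.mem_univ _, by simpa using hω⟩
  split_ifs
  · exact hlp_mass_nonneg P T ω'
  · exact le_rfl

theorem hlp_E [∀ t, Fintype (X t)] (S : Sys X U1 U2 W V1 V2 Y1 Y2)
    (g : Strat U1 U2 Y1 Y2) (P : PrimPMF X W V1 V2) (T t : ℕ) (ht : t < T)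
    (ω₀ : ΩT X W V1 V2 T) (h0 : 0 < mass P T ω₀)
    (F : X (t+1) → Y1 (t+1) → Y2 (t+1) → ℝ) :
    (∑ ω : ΩT X W V1 V2 T, if m1Traj S g (toPrim T ω) t = m1Traj S g (toPrim T ω₀) t then
      mass P T ω * F (xTraj S g (toPrim T ω) (t+1)) (y1Traj S g (toPrim T ω) (t+1))
        (y2Traj S g (toPrim T ω) (t+1)) else 0) =
    hlpD S g P T t (m1Traj S g (toPrim T ω₀) t) * ∑ x : X t, infoState1 S g P T ω₀ t x *
      hlpQ S P t x (u1Traj S g (toPrim T ω₀) t) (u2Traj S g (toPrim T ω₀) t) F := by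
  have hD := (hlp_D_pos S g P T t ω₀ h0).ne'
  rw [hlp_joint S g P T t ht, Finset.mul_sum]
  refine Finset.sum_congr rfl fun x _ => ?_
  have : infoState1 S g P T ω₀ t x = (∑ ω : ΩT X W V1 V2 T, if xTraj S g (toPrim T ω) t = x ∧
        m1Traj S g (toPrim T ω) t = m1Traj S g (toPrim T ω₀) t then mass P T ω else 0) /
        hlpD S g P T t (m1Traj S g (toPrim T ω₀) t) := by
    unfold infoState1 condProb hlpD
    congr!
  rw [this, ← mul_assoc, mul_div_cancel₀ _ hD]
  rfl

/-- The filter. -/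
def hlpFtil [∀ t, Fintype (X t)] (S : Sys X U1 U2 W V1 V2 Y1 Y2) (P : PrimPMF X W V1 V2)
    (t : ℕ) (π : X t → ℝ) (u1 : U1 t) (u2 : U2 t)
    (z : Y1 (t + 1) × U1 t × Y2 (t + 1) × U2 t) : X (t + 1) → ℝ := fun x' =>
  (∑ x, π x * hlpQ S P t x u1 u2
    (fun x'' y1 y2 => if x'' = x' ∧ y1 = z.1 ∧ y2 = z.2.2.1 then 1 else 0)) /
  (∑ x, π x * hlpQ S P t x u1 u2
    (fun _ y1 y2 => if y1 = z.1 ∧ y2 = z.2.2.1 then 1 else 0))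

theorem hlp_ite (p : Prop) (i j : Decidable p) (a : ℝ) :
    @ite ℝ p i a 0 = a * @ite ℝ p j 1 0 := by
  by_cases h : p
  · rw [if_pos h, if_pos h, mul_one]
  · rw [if_neg h, if_neg h, mul_zero]

theorem hlp_filter [∀ t, Fintype (X t)] (S : Sys X U1 U2 W V1 V2 Y1 Y2)
    (g : Strat U1 U2 Y1 Y2) (P : PrimPMF X W V1 V2) (T t : ℕ) (ht : t < T)
    (ω : ΩT X W V1 V2 T) (h0 : 0 < mass P T ω) :
    infoState1 S g P T ω (t + 1) =
      hlpFtil S P t (infoState1 S g P T ω t) (u1Traj S g (toPrim T ω) t)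
        (u2Traj S g (toPrim T ω) t) (z1Traj S g (toPrim T ω) t) := by
  have hD := (hlp_D_pos S g P T t ω h0).ne'
  funext x'
  unfold hlpFtil
  rw [← mul_div_mul_left _ _ hD, ← hlp_E S g P T t ht ω h0, ← hlp_E S g P T t ht ω h0]
  unfold infoState1 condProb
  simp only [z1Traj, hlp_m1_succ]
  congr 1
  · refine Finset.sum_congr rfl fun ω' _ => ?_
    by_cases hm : m1Traj S g (toPrim T ω') t = m1Traj S g (toPrim T ω) t
    · simp only [hm, true_and, if_true]
      exact hlp_ite _ _ _ _
    · simp [hm]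
  · refine Finset.sum_congr rfl fun ω' _ => ?_
    by_cases hm : m1Traj S g (toPrim T ω') t = m1Traj S g (toPrim T ω) t
    · simp only [hm, true_and, if_true]
      exact hlp_ite _ _ _ _
    · simp [hm]

theorem hlp_num [∀ t, Fintype (X t)] (S : Sys X U1 U2 W V1 V2 Y1 Y2)
    (g : Strat U1 U2 Y1 Y2) (P : PrimPMF X W V1 V2) (T t : ℕ) (ht : t < T)
    (ω₀ : ΩT X W V1 V2 T) (h0 : 0 < mass P T ω₀) (P1 : Set (X (t + 1) → ℝ)) :
    (∑ ω : ΩT X W V1 V2 T, if infoState1 S g P T ω (t + 1) ∈ P1 ∧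
      m1Traj S g (toPrim T ω) t = m1Traj S g (toPrim T ω₀) t then mass P T ω else 0) =
    hlpD S g P T t (m1Traj S g (toPrim T ω₀) t) * ∑ x : X t, infoState1 S g P T ω₀ t x *
      hlpQ S P t x (u1Traj S g (toPrim T ω₀) t) (u2Traj S g (toPrim T ω₀) t)
        (fun _ y1 y2 => if hlpFtil S P t (infoState1 S g P T ω₀ t) (u1Traj S g (toPrim T ω₀) t)
          (u2Traj S g (toPrim T ω₀) t)
          (y1, u1Traj S g (toPrim T ω₀) t, y2, u2Traj S g (toPrim T ω₀) t) ∈ P1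
          then 1 else 0) := by
  rw [← hlp_E S g P T t ht ω₀ h0]
  refine Finset.sum_congr rfl fun ω _ => ?_
  by_cases hm : m1Traj S g (toPrim T ω) t = m1Traj S g (toPrim T ω₀) t
  · rcases (hlp_mass_nonneg P T ω).eq_or_lt with hz | hpos
    · simp [← hz]
    · have hi : infoState1 S g P T ω t = infoState1 S g P T ω₀ t := by
        funext x
        simp only [infoState1, hm]
      have hu1 : u1Traj S g (toPrim T ω) t = u1Traj S g (toPrim T ω₀) t := by
        simp only [u1Traj, hm]
      have hu2 : u2Traj S g (toPrim T ω) t = u2Traj S g (toPrim T ω₀) t :=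
        congrArg (fun m : M1 Y1 Y2 U1 U2 t => g.g2 t m.2) hm
      rw [hlp_filter S g P T t ht ω hpos]
      simp only [hi, hu1, hu2, hm, z1Traj, and_true, if_true]
      split_ifs <;> simp
  · simp [hm]

/-- Lemma 6 of the paper. There is a strategy-independent filter
`f̃¹_t` with `Π¹_{t+1} = f̃¹_t (Π¹_t, U¹_t, U²_t, Z¹_{t+1})` along every realization
of positive probability; consequently, for every (Borel) set `P¹` of distributions,
`P(Π¹_{t+1} ∈ P¹ | M¹_t, U²_t) = P(Π¹_{t+1} ∈ P¹ | Π¹_t, U¹_t, U²_t)`. -/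
theorem infoState1_filter
    [∀ t, Fintype (X t)] [∀ t, Fintype (U1 t)] [∀ t, Fintype (U2 t)]
    [∀ t, Fintype (Y1 t)] [∀ t, Fintype (Y2 t)]
    (T : ℕ) (S : Sys X U1 U2 W V1 V2 Y1 Y2) (P : PrimPMF X W V1 V2) :
    ∃ ftil : ∀ t, (X t → ℝ) → U1 t → U2 t →
        (Y1 (t + 1) × U1 t × Y2 (t + 1) × U2 t) → (X (t + 1) → ℝ),
      ∀ (g : Strat U1 U2 Y1 Y2) (ψ : ∀ t, M2 Y2 U2 t → (X t → ℝ) → U1 t),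
        Compat S g ψ P T →
        ∀ t, t < T → ∀ ω : ΩT X W V1 V2 T, 0 < mass P T ω →
          (infoState1 S g P T ω (t + 1) =
            ftil t (infoState1 S g P T ω t) (u1Traj S g (toPrim T ω) t)
              (u2Traj S g (toPrim T ω) t) (z1Traj S g (toPrim T ω) t)) ∧
          ∀ P1 : Set (X (t + 1) → ℝ),
            condProb (mass P T) (fun ω' => infoState1 S g P T ω' (t + 1) ∈ P1)
              (fun ω' => m1Traj S g (toPrim T ω') t = m1Traj S g (toPrim T ω) t ∧
                u2Traj S g (toPrim T ω') t = u2Traj S g (toPrim T ω) t) =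
            condProb (mass P T) (fun ω' => infoState1 S g P T ω' (t + 1) ∈ P1)
              (fun ω' => infoState1 S g P T ω' t = infoState1 S g P T ω t ∧
                u1Traj S g (toPrim T ω') t = u1Traj S g (toPrim T ω) t ∧
                u2Traj S g (toPrim T ω') t = u2Traj S g (toPrim T ω) t) := by
  refine ⟨hlpFtil S P, ?_⟩
  intro g ψ _ t ht ω hω
  refine ⟨hlp_filter S g P T t ht ω hω, ?_⟩
  intro P1
  have hu2 : ∀ ω' : ΩT X W V1 V2 T, m1Traj S g (toPrim T ω') t = m1Traj S g (toPrim T ω) t →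
      u2Traj S g (toPrim T ω') t = u2Traj S g (toPrim T ω) t := fun ω' hm =>
    congrArg (fun m : M1 Y1 Y2 U1 U2 t => g.g2 t m.2) hm
  obtain ⟨R, hR⟩ : ∃ R : ℝ, R = ∑ x : X t, infoState1 S g P T ω t x *
      hlpQ S P t x (u1Traj S g (toPrim T ω) t) (u2Traj S g (toPrim T ω) t)
        (fun _ y1 y2 => if hlpFtil S P t (infoState1 S g P T ω t) (u1Traj S g (toPrim T ω) t)
          (u2Traj S g (toPrim T ω) t)
          (y1, u1Traj S g (toPrim T ω) t, y2, u2Traj S g (toPrim T ω) t) ∈ P1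
          then 1 else 0) := ⟨_, rfl⟩
  trans R
  · unfold condProb
    have hn := hlp_num S g P T t ht ω hω P1
    rw [← hR] at hn
    have e : ∀ ω' : ΩT X W V1 V2 T, (m1Traj S g (toPrim T ω') t = m1Traj S g (toPrim T ω) t ∧
        u2Traj S g (toPrim T ω') t = u2Traj S g (toPrim T ω) t) ↔
        m1Traj S g (toPrim T ω') t = m1Traj S g (toPrim T ω) t :=
      fun ω' => ⟨fun h => h.1, fun h => ⟨h, hu2 ω' h⟩⟩
    simp only [e]
    have hD := (hlp_D_pos S g P T t ω hω).ne'
    rw [div_eq_iff (by simpa [hlpD] using hD)]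
    rw [mul_comm R]
    exact hn
  · obtain ⟨B, hB⟩ : ∃ B : ΩT X W V1 V2 T → Prop, B = fun ω' =>
        infoState1 S g P T ω' t = infoState1 S g P T ω t ∧
          u1Traj S g (toPrim T ω') t = u1Traj S g (toPrim T ω) t ∧
          u2Traj S g (toPrim T ω') t = u2Traj S g (toPrim T ω) t := ⟨_, rfl⟩
    rw [← hB]
    have hBω : B ω := by rw [hB]; exact ⟨rfl, rfl, rfl⟩
    have hBm : ∀ ω₁ ω₂ : ΩT X W V1 V2 T,
        m1Traj S g (toPrim T ω₁) t = m1Traj S g (toPrim T ω₂) t → B ω₂ → B ω₁ := by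
      intro ω₁ ω₂ hm h
      rw [hB] at h ⊢
      refine ⟨?_, ?_, ?_⟩
      · rw [← h.1]; funext x; simp only [infoState1, hm]
      · rw [← h.2.1]; simp only [u1Traj, hm]
      · rw [← h.2.2]; exact congrArg (fun m : M1 Y1 Y2 U1 U2 t => g.g2 t m.2) hm
    unfold condProb
    have hpos : 0 < ∑ ω', if B ω' then mass P T ω' else 0 := by
      refine Finset.sum_pos' (fun ω' _ => ?_) ⟨ω, Finset.mem_univ _, by simpa [hBω] using hω⟩
      split_ifs
      · exact hlp_mass_nonneg P T ω'
      · exact le_rfl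
    rw [eq_div_iff hpos.ne']
    have fib : ∀ G : ΩT X W V1 V2 T → ℝ, ∑ ω', G ω' =
        ∑ m : M1 Y1 Y2 U1 U2 t, ∑ ω', if m1Traj S g (toPrim T ω') t = m then G ω' else 0 := by
      intro G
      rw [Finset.sum_comm]
      simp
    rw [fib, fib (fun ω' => if infoState1 S g P T ω' (t + 1) ∈ P1 ∧ B ω' then mass P T ω' else 0),
      Finset.mul_sum]
    refine Finset.sum_congr rfl fun m _ => ?_
    by_cases hex : ∃ ω₁ : ΩT X W V1 V2 T, m1Traj S g (toPrim T ω₁) t = m ∧ B ω₁ ∧ 0 < mass P T ω₁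
    · obtain ⟨ω₁, rfl, hB1, hp1⟩ := hex
      have hn := hlp_num S g P T t ht ω₁ hp1 P1
      have hB1' := hB1
      rw [hB] at hB1'
      rw [hB1'.1, hB1'.2.1, hB1'.2.2, ← hR] at hn
      trans hlpD S g P T t (m1Traj S g (toPrim T ω₁) t) * R
      · rw [mul_comm]
        congr 1
        unfold hlpD
        refine Finset.sum_congr rfl fun ω' _ => ?_
        by_cases hm : m1Traj S g (toPrim T ω') t = m1Traj S g (toPrim T ω₁) t
        · simp [hm, hBm ω' ω₁ hm hB1]
        · simp [hm]
      · rw [← hn]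
        refine Finset.sum_congr rfl fun ω' _ => ?_
        by_cases hm : m1Traj S g (toPrim T ω') t = m1Traj S g (toPrim T ω₁) t
        · simp [hm, hBm ω' ω₁ hm hB1]
        · simp [hm]
    · have hz : ∀ ω' : ΩT X W V1 V2 T, m1Traj S g (toPrim T ω') t = m → B ω' → mass P T ω' = 0 := by
        intro ω' h1 h2
        by_contra h3
        exact hex ⟨ω', h1, h2, lt_of_le_of_ne (hlp_mass_nonneg P T ω') (Ne.symm h3)⟩
      rw [Finset.sum_eq_zero, Finset.sum_eq_zero, mul_zero]
      · intro ω' _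
        split_ifs with h1 h2
        · exact hz ω' h1 h2.2
        · rfl
        · rfl
      · intro ω' _
        split_ifs with h1 h2
        · exact hz ω' h1 h2
        · rfl
        · rfl

end

end NestedTeam
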